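/- arXiv:2404.11853 — 6 statements merged into one kernel-verified Lean document; each statement's English description precedes it below -/
import Mathlib

section
/- For all integers k ≥ 0 and m ≥ 1, we have Σ_{j=1}^{k} ξ_m^j/j! − Σ_{j=m+1}^{m+k} ξ_m^j/j! ≥ 0. -/
open Real Finset

/-- For all integers `k ≥ 0` and `m ≥ 1`, writing `ξ_m` for the unique
positive solution of `Σ_{j=m+1}^{∞} x^j/j! = 1`, we have
`Σ_{j=1}^{k} ξ_m^j/j! − Σ_{j=m+1}^{m+k} ξ_m^j/j! ≥ 0`. -/
theorem partial_sums_nonneg (k m : ℕ) (hm : 1 ≤ m) (x : ℝ) (hx : 0 < x)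
    (hxm : (∑' j : ℕ, x ^ (m + 1 + j) / (Nat.factorial (m + 1 + j) : ℝ)) = 1) :
    0 ≤ (∑ j ∈ Finset.Icc 1 k, x ^ j / (Nat.factorial j : ℝ)) -
        ∑ j ∈ Finset.Icc (m + 1) (m + k), x ^ j / (Nat.factorial j : ℝ) := by
  have h1 : Finset.Icc 1 k = Finset.Ico 1 (1 + k) := by
    ext; simp only [Finset.mem_Icc, Finset.mem_Ico]; omega
  have h2 : Finset.Icc (m + 1) (m + k) = Finset.Ico (m + 1) (m + 1 + k) := by
    ext; simp only [Finset.mem_Icc, Finset.mem_Ico]; omega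
  rw [h1, h2, Finset.sum_Ico_eq_sum_range, Finset.sum_Ico_eq_sum_range,
    Nat.add_sub_cancel_left, Nat.add_sub_cancel_left, sub_nonneg]
  rcases le_or_gt 1 x with h | h
  · rcases Nat.eq_zero_or_pos k with rfl | hk
    · simp
    have hs : Summable (fun j : ℕ => x ^ (m + 1 + j) / (Nat.factorial (m + 1 + j) : ℝ)) :=
      (Real.summable_pow_div_factorial x).comp_injective (add_right_injective (m + 1))
    have ht := hs.sum_le_tsum (Finset.range k) (fun j _ => by positivity)
    rw [hxm] at ht
    have hl := Finset.single_le_sum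
      (f := fun j : ℕ => x ^ (1 + j) / (Nat.factorial (1 + j) : ℝ)) (s := Finset.range k)
      (fun j _ => by positivity) (Finset.mem_range.2 hk)
    simp only [add_zero, pow_one, Nat.factorial_one, Nat.cast_one, div_one] at hl
    linarith
  · refine Finset.sum_le_sum fun j _ => ?_
    have hp : x ^ (m + 1 + j) ≤ x ^ (1 + j) :=
      pow_le_pow_of_le_one hx.le h.le (by omega)
    have hf : (Nat.factorial (1 + j) : ℝ) ≤ (Nat.factorial (m + 1 + j) : ℝ) := by
      exact_mod_cast Nat.factorial_le (by omega)
    exact div_le_div₀ (by positivity) hp (by positivity) hf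
end

section
/- For all integers m ≥ 1 and k ≥ 2, the interval sum Σ_{i=k−1}^{k+m−2} e^{−ξ_m} · ξ_m^i/i! is at most Σ_{i=1}^{m} e^{−ξ_m} · ξ_m^i/i!; that is, among length-m windows of the Poisson(ξ_m) probability mass function starting at index ≥ 1, the window {1, …, m} has the largest total mass. -/
open Real Finset

lemma fact_aux (m t : ℕ) :
    Nat.factorial (m + 1) * Nat.factorial (t + 1) ≤ Nat.factorial (t + 1 + m) := by
  induction t with
  | zero => simp [Nat.add_comm]
  | succ t ih =>
    have e : t + 1 + 1 + m = (t + 1 + m) + 1 := by omega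
    rw [e, Nat.factorial_succ (t + 1 + m), Nat.factorial_succ (t + 1)]
    calc _ = (t + 1 + 1) * (Nat.factorial (m + 1) * Nat.factorial (t + 1)) := by ring
      _ ≤ _ := Nat.mul_le_mul (by omega) ih

lemma pow_aux (m : ℕ) (x : ℝ) (hx : 0 < x)
    (hxm : (∑' j : ℕ, x ^ (m + 1 + j) / (Nat.factorial (m + 1 + j) : ℝ)) = 1) :
    x ^ m ≤ (Nat.factorial (m + 1) : ℝ) := by
  have hf : (1 : ℝ) ≤ (Nat.factorial (m + 1) : ℝ) := by
    exact_mod_cast Nat.factorial_pos (m + 1)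
  rcases le_total x 1 with h | h
  · exact (pow_le_one₀ hx.le h).trans hf
  · have hs : Summable (fun j : ℕ => x ^ (m + 1 + j) / (Nat.factorial (m + 1 + j) : ℝ)) := by
      by_contra hn
      rw [tsum_eq_zero_of_not_summable hn] at hxm
      exact zero_ne_one hxm
    have h0 := hs.le_tsum 0 (fun j _ => by positivity)
    rw [hxm] at h0
    simp only [add_zero] at h0
    rw [div_le_one (by positivity)] at h0
    exact (pow_le_pow_right₀ h (Nat.le_succ m)).trans h0

lemma window_aux (m : ℕ) (f : ℕ → ℝ) (h : ∀ t, f (t + 1 + m) ≤ f (t + 1)) (n : ℕ) :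
    ∑ j ∈ Finset.range m, f (n + 1 + j) ≤ ∑ j ∈ Finset.range m, f (1 + j) := by
  induction n with
  | zero => simp
  | succ n ih =>
    have h1 := Finset.sum_range_succ (fun j => f (n + 1 + j)) m
    have h2 := Finset.sum_range_succ' (fun j => f (n + 1 + j)) m
    have h3 : ∑ j ∈ Finset.range m, f (n + 1 + (j + 1))
        = ∑ j ∈ Finset.range m, f (n + 1 + 1 + j) :=
      Finset.sum_congr rfl (fun j _ => by congr 1; omega)
    simp only [add_zero] at h2
    linarith [h n]

/-- For all integers `m ≥ 1` and `k ≥ 2`, writing `ξ_m` for the unique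
positive solution of `Σ_{j=m+1}^{∞} x^j/j! = 1`, the Poisson(ξ_m) mass of the window
`{k−1, …, k+m−2}` is at most that of the window `{1, …, m}`. -/
theorem poisson_window_le (m k : ℕ) (hm : 1 ≤ m) (hk : 2 ≤ k) (x : ℝ) (hx : 0 < x)
    (hxm : (∑' j : ℕ, x ^ (m + 1 + j) / (Nat.factorial (m + 1 + j) : ℝ)) = 1) :
    (∑ i ∈ Finset.Icc (k - 1) (k + m - 2), Real.exp (-x) * x ^ i / (Nat.factorial i : ℝ)) ≤
      ∑ i ∈ Finset.Icc 1 m, Real.exp (-x) * x ^ i / (Nat.factorial i : ℝ) := by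
  obtain ⟨n, rfl⟩ := Nat.exists_eq_add_of_le' hk
  have e1 : Finset.Icc (n + 2 - 1) (n + 2 + m - 2) = Finset.Ico (n + 1) (n + 1 + m) := by
    ext i; simp only [Finset.mem_Icc, Finset.mem_Ico]; omega
  have e2 : Finset.Icc 1 m = Finset.Ico 1 (1 + m) := by
    ext i; simp only [Finset.mem_Icc, Finset.mem_Ico]; omega
  rw [e1, e2, Finset.sum_Ico_eq_sum_range, Finset.sum_Ico_eq_sum_range,
    Nat.add_sub_cancel_left, Nat.add_sub_cancel_left]
  refine window_aux m (fun i => Real.exp (-x) * x ^ i / (Nat.factorial i : ℝ)) (fun t => ?_) n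
  have hp := pow_aux m x hx hxm
  have hf : (Nat.factorial (m + 1) : ℝ) * (Nat.factorial (t + 1) : ℝ)
      ≤ (Nat.factorial (t + 1 + m) : ℝ) := by exact_mod_cast fact_aux m t
  have key : x ^ m * (Nat.factorial (t + 1) : ℝ) ≤ (Nat.factorial (t + 1 + m) : ℝ) :=
    (mul_le_mul_of_nonneg_right hp (by positivity)).trans hf
  show Real.exp (-x) * x ^ (t + 1 + m) / (Nat.factorial (t + 1 + m) : ℝ)
    ≤ Real.exp (-x) * x ^ (t + 1) / (Nat.factorial (t + 1) : ℝ)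
  rw [div_le_div_iff₀ (by positivity) (by positivity), pow_add x (t + 1) m]
  calc _ = (Real.exp (-x) * x ^ (t + 1)) * (x ^ m * (Nat.factorial (t + 1) : ℝ)) := by ring
    _ ≤ _ := mul_le_mul_of_nonneg_left key (by positivity)
end

section
/- Let n ≥ 1 and let σ be a uniformly random permutation of {1, …, n}, where σ(i) is interpreted as the value observed at position i. Let E be the event that either σ(1) = n, or the set I = {i > 1 : σ(i) > σ(1)} is nonempty and σ(min I) = n (i.e., the first value after position 1 that exceeds σ(1) is the maximum value n). Then P(E) = (1 + H_{n−1})/n, where H_0 = 0 and H_k = Σ_{t=1}^{k} 1/t is the k-th harmonic number. -/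
open Finset
open scoped Classical


/-- `v` is the first value exceeding the value at position `0`. -/
def FirstExc {N : ℕ} (σ : Equiv.Perm (Fin (N+1))) (v : Fin (N+1)) : Prop :=
  σ 0 < v ∧ ∀ i, σ 0 < σ i → σ.symm v ≤ i

lemma card_first_eq {N : ℕ} (a : Fin (N+1)) :
    (univ.filter (fun σ : Equiv.Perm (Fin (N+1)) => σ 0 = a)).card = N.factorial := by
  have hc : ∀ b : Fin (N+1), (univ.filter (fun σ : Equiv.Perm (Fin (N+1)) => σ 0 = b)).card
      = (univ.filter (fun σ : Equiv.Perm (Fin (N+1)) => σ 0 = a)).card := by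
    intro b
    refine Finset.card_bij' (fun σ _ => Equiv.swap a b * σ) (fun σ _ => Equiv.swap a b * σ)
      ?_ ?_ ?_ ?_
    · intro σ h
      simp only [mem_filter, mem_univ, true_and] at h ⊢
      simp [h]
    · intro σ h
      simp only [mem_filter, mem_univ, true_and] at h ⊢
      simp [h]
    · intro σ h
      simp
    · intro σ h
      simp
  have h1 := Finset.card_eq_sum_card_fiberwise
    (s := (univ : Finset (Equiv.Perm (Fin (N+1))))) (t := (univ : Finset (Fin (N+1))))
    (f := fun σ => σ 0) (by intro x _; simp)
  rw [Finset.sum_congr rfl (fun b _ => hc b)] at h1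
  simp only [card_univ, Fintype.card_perm, Fintype.card_fin, sum_const, smul_eq_mul,
    Nat.factorial_succ] at h1
  exact (Nat.eq_of_mul_eq_mul_left (Nat.succ_pos N) h1).symm

lemma firstExc_swap {N : ℕ} (a v w : Fin (N+1)) (hv : a < v) (hw : a < w)
    (σ : Equiv.Perm (Fin (N+1))) (h : σ 0 = a ∧ FirstExc σ v) :
    (Equiv.swap v w * σ) 0 = a ∧ FirstExc (Equiv.swap v w * σ) w := by
  obtain ⟨h0, h1, h2⟩ := h
  have e0 : (Equiv.swap v w * σ) 0 = a := by
    rw [Equiv.Perm.mul_apply, h0, Equiv.swap_apply_of_ne_of_ne hv.ne hw.ne]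
  refine ⟨e0, ?_, ?_⟩
  · rw [e0]; exact hw
  · intro i hi
    rw [e0, Equiv.Perm.mul_apply] at hi
    have e1 : (Equiv.swap v w * σ).symm w = σ.symm v := by
      rw [Equiv.symm_apply_eq]; simp
    rw [e1]
    apply h2
    rw [h0]
    by_cases h3 : σ i = v
    · rw [h3]; exact hv
    · by_cases h4 : σ i = w
      · rw [h4]; exact hw
      · rwa [Equiv.swap_apply_of_ne_of_ne h3 h4] at hi

lemma firstExc_unique {N : ℕ} (σ : Equiv.Perm (Fin (N+1))) (v w : Fin (N+1))
    (hv : FirstExc σ v) (hw : FirstExc σ w) : v = w := by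
  apply σ.symm.injective
  apply le_antisymm
  · exact hv.2 _ (by simpa using hw.1)
  · exact hw.2 _ (by simpa using hv.1)

lemma firstExc_exists {N : ℕ} (σ : Equiv.Perm (Fin (N+1))) (h : σ 0 < Fin.last N) :
    ∃ v, FirstExc σ v := by
  have hne : (univ.filter (fun i : Fin (N+1) => σ 0 < σ i)).Nonempty :=
    ⟨σ.symm (Fin.last N), by simpa using h⟩
  refine ⟨σ ((univ.filter (fun i : Fin (N+1) => σ 0 < σ i)).min' hne), ?_, ?_⟩
  · have := Finset.min'_mem _ hne
    exact (mem_filter.1 this).2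
  · intro i hi
    rw [Equiv.symm_apply_apply]
    exact Finset.min'_le _ _ (by simpa using hi)

lemma card_firstExc {N : ℕ} (a : Fin (N+1)) (ha : a < Fin.last N) :
    (N - (a : ℕ)) * (univ.filter (fun σ : Equiv.Perm (Fin (N+1)) =>
      σ 0 = a ∧ FirstExc σ (Fin.last N))).card = N.factorial := by
  have hc : ∀ v ∈ Finset.Ioi a, (univ.filter (fun σ : Equiv.Perm (Fin (N+1)) =>
      σ 0 = a ∧ FirstExc σ v)).card = (univ.filter (fun σ : Equiv.Perm (Fin (N+1)) =>
      σ 0 = a ∧ FirstExc σ (Fin.last N))).card := by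
    intro v hv
    rw [Finset.mem_Ioi] at hv
    refine Finset.card_bij' (fun σ _ => Equiv.swap v (Fin.last N) * σ)
      (fun σ _ => Equiv.swap v (Fin.last N) * σ) ?_ ?_ ?_ ?_
    · intro σ h
      simp only [mem_filter, mem_univ, true_and] at h ⊢
      exact firstExc_swap a v _ hv ha σ h
    · intro σ h
      simp only [mem_filter, mem_univ, true_and] at h ⊢
      rw [Equiv.swap_comm]
      exact firstExc_swap a _ v ha hv σ h
    · intro σ h
      simp
    · intro σ h
      simp
  have hU : univ.filter (fun σ : Equiv.Perm (Fin (N+1)) => σ 0 = a) =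
      (Finset.Ioi a).biUnion (fun v => univ.filter (fun σ : Equiv.Perm (Fin (N+1)) =>
        σ 0 = a ∧ FirstExc σ v)) := by
    ext σ
    simp only [mem_filter, mem_univ, true_and, mem_biUnion, Finset.mem_Ioi]
    constructor
    · intro h
      obtain ⟨v, hv⟩ := firstExc_exists σ (h ▸ ha)
      exact ⟨v, h ▸ hv.1, h, hv⟩
    · rintro ⟨v, _, h, _⟩
      exact h
  have h1 := card_first_eq a
  rw [hU, Finset.card_biUnion, Finset.sum_congr rfl hc] at h1
  · rw [Finset.sum_const, smul_eq_mul, Fin.card_Ioi] at h1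
    rw [← h1]
    congr 1
  · intro v _ w _ hvw
    refine Finset.disjoint_left.2 ?_
    intro σ h h'
    exact hvw (firstExc_unique σ v w (mem_filter.1 h).2.2 (mem_filter.1 h').2.2)

lemma event_iff {N : ℕ} (σ : Equiv.Perm (Fin (N+1))) :
    (∃ h : (univ.filter (fun i : Fin (N+1) => 0 < i ∧ σ 0 < σ i)).Nonempty,
      σ ((univ.filter (fun i : Fin (N+1) => 0 < i ∧ σ 0 < σ i)).min' h) = Fin.last N) ↔
    FirstExc σ (Fin.last N) := by
  have hpos : ∀ i, σ 0 < σ i → 0 < i := by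
    intro i hi
    rw [Fin.pos_iff_ne_zero]
    rintro rfl
    exact lt_irrefl _ hi
  constructor
  · rintro ⟨h, e⟩
    have hm := (mem_filter.1 (Finset.min'_mem _ h)).2.2
    rw [e] at hm
    refine ⟨hm, fun i hi => ?_⟩
    rw [← e, Equiv.symm_apply_apply]
    exact Finset.min'_le _ _ (mem_filter.2 ⟨mem_univ _, hpos i hi, hi⟩)
  · rintro ⟨h1, h2⟩
    have hmem : σ.symm (Fin.last N) ∈
        univ.filter (fun i : Fin (N+1) => 0 < i ∧ σ 0 < σ i) := by
      have h3 : σ 0 < σ (σ.symm (Fin.last N)) := by simpa using h1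
      exact mem_filter.2 ⟨mem_univ _, hpos _ h3, h3⟩
    refine ⟨⟨_, hmem⟩, ?_⟩
    rw [← Equiv.eq_symm_apply]
    apply le_antisymm
    · exact Finset.min'_le _ _ hmem
    · exact h2 _ (mem_filter.1 (Finset.min'_mem _ ⟨_, hmem⟩)).2.2

lemma card_event (N : ℕ) :
    ((univ.filter (fun σ : Equiv.Perm (Fin (N+1)) =>
      σ 0 = Fin.last N ∨ FirstExc σ (Fin.last N))).card : ℝ) =
    N.factorial * (1 + ∑ t ∈ Finset.Icc 1 N, (1 : ℝ) / (t : ℝ)) := by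
  rw [Finset.card_eq_sum_card_fiberwise (t := (univ : Finset (Fin (N+1))))
    (f := fun σ => σ 0) (by intro x _; simp), Fin.sum_univ_castSucc]
  push_cast
  have hl : (((univ.filter (fun σ : Equiv.Perm (Fin (N+1)) =>
      σ 0 = Fin.last N ∨ FirstExc σ (Fin.last N))).filter
        (fun σ => σ 0 = Fin.last N)).card : ℝ) = N.factorial := by
    rw [← card_first_eq (Fin.last N), Finset.filter_filter]
    congr 2
    ext σ
    simp only [mem_filter, mem_univ, true_and]
    tauto
  have hi : ∀ i : Fin N, (((univ.filter (fun σ : Equiv.Perm (Fin (N+1)) =>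
      σ 0 = Fin.last N ∨ FirstExc σ (Fin.last N))).filter
        (fun σ => σ 0 = i.castSucc)).card : ℝ) =
        N.factorial * (1 / ((N - (i : ℕ) : ℕ) : ℝ)) := by
    intro i
    have h := card_firstExc i.castSucc (Fin.castSucc_lt_last i)
    have hp : ((N - (i : ℕ) : ℕ) : ℝ) ≠ 0 := by
      have := i.2
      exact_mod_cast (by omega : N - (i : ℕ) ≠ 0)
    rw [Fin.val_castSucc] at h
    rw [← h, Nat.cast_mul, mul_one_div, mul_div_cancel_left₀ _ hp, Finset.filter_filter]
    congr 2
    ext σ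
    simp only [mem_filter, mem_univ, true_and]
    constructor
    · rintro ⟨h1 | h1, h2⟩
      · exact absurd (h2.symm.trans h1) (Fin.castSucc_lt_last i).ne
      · exact ⟨h2, h1⟩
    · rintro ⟨h1, h2⟩
      exact ⟨Or.inr h2, h1⟩
  rw [hl, Finset.sum_congr rfl (fun i _ => hi i), ← Finset.mul_sum]
  have hs : ∑ i : Fin N, 1 / ((N - (i : ℕ) : ℕ) : ℝ) = ∑ t ∈ Finset.Icc 1 N, (1 : ℝ) / (t : ℝ) := by
    rw [← Finset.sum_range (fun i => 1 / ((N - i : ℕ) : ℝ))]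
    refine Finset.sum_bij' (fun i _ => N - i) (fun t _ => N - t) ?_ ?_ ?_ ?_ ?_
    · intro i h; simp only [Finset.mem_range, Finset.mem_Icc] at *; omega
    · intro i h; simp only [Finset.mem_range, Finset.mem_Icc] at *; omega
    · intro i h; simp only [Finset.mem_range, Finset.mem_Icc] at *; omega
    · intro i h; simp only [Finset.mem_range, Finset.mem_Icc] at *; omega
    · intro i h; rfl
  rw [hs]
  ring

/-- Let `σ` be a uniformly random permutation of `{1, …, n}` (here modeled
on `Fin n`, with position `⟨0⟩` first and maximum value `⟨n−1⟩`). Let `E` be the event that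
either the first value is the maximum, or the first later value exceeding the first value is
the maximum. Then `P(E) = (1 + H_{n−1})/n`, where `H_k = Σ_{t=1}^{k} 1/t`. -/
theorem prob_first_exceeding_is_max (n : ℕ) (hn : 1 ≤ n) :
    ((Finset.univ.filter (fun σ : Equiv.Perm (Fin n) =>
        σ ⟨0, hn⟩ = ⟨n - 1, by omega⟩ ∨
        ∃ h : (Finset.univ.filter (fun i : Fin n => (⟨0, hn⟩ : Fin n) < i ∧ σ ⟨0, hn⟩ < σ i)).Nonempty,
          σ ((Finset.univ.filter (fun i : Fin n => (⟨0, hn⟩ : Fin n) < i ∧ σ ⟨0, hn⟩ < σ i)).min' h)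
            = ⟨n - 1, by omega⟩)).card : ℝ) / (Nat.factorial n : ℝ) =
      (1 + ∑ t ∈ Finset.Icc 1 (n - 1), (1 : ℝ) / (t : ℝ)) / (n : ℝ) := by
  obtain ⟨N, rfl⟩ : ∃ N, n = N + 1 := ⟨n - 1, by omega⟩
  have h := card_event N
  have hE : ∀ σ : Equiv.Perm (Fin (N+1)), _ := fun σ => event_iff σ
  simp only [← hE] at h
  refine Eq.trans (congrArg (fun x : ℝ => x / ((N+1).factorial : ℝ)) (Eq.trans ?_ h)) ?_
  · rfl
  · have : (N.factorial : ℝ) ≠ 0 := by exact_mod_cast N.factorial_ne_zero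
    have h2 : ((N : ℝ) + 1) ≠ 0 := by positivity
    simp only [Nat.factorial_succ, Nat.cast_mul, Nat.add_sub_cancel, Nat.cast_add, Nat.cast_one]
    field_simp
end

section
/- Let m ≥ 98 be an integer and let n be a positive integer with n ≤ 2e^{√m}. Let Z_1, …, Z_n be independent Bernoulli random variables with P(Z_i = 1) = 1/i for each i, and let M = Σ_{i=1}^{n} Z_i. Then P(M ≥ m + 2) ≤ m^{−m/5}. -/
open MeasureTheory ProbabilityTheory Finset

/-- Let `m ≥ 98` and let `n ≥ 1` with `n ≤ 2e^{√m}`. Let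
`Z_1, …, Z_n` be independent Bernoulli random variables with `P(Z_i = 1) = 1/i`
(here indexed by `i : Fin n`, so the `i`-th variable has success probability `1/(i+1)`),
and let `M = Σ_i Z_i`. Then `P(M ≥ m + 2) ≤ m^{−m/5}`. -/
theorem changes_of_max_tail_bound {Ω : Type*} [MeasurableSpace Ω]
    (μ : Measure Ω) [IsProbabilityMeasure μ]
    (m n : ℕ) (hm : 98 ≤ m) (hn : 1 ≤ n)
    (hnm : (n : ℝ) ≤ 2 * Real.exp (Real.sqrt m))
    (Z : Fin n → Ω → ℕ) (hmeas : ∀ i, Measurable (Z i))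
    (hindep : ProbabilityTheory.iIndepFun Z μ)
    (hval : ∀ i ω, Z i ω ≤ 1)
    (hp : ∀ i : Fin n, μ {ω | Z i ω = 1} = ENNReal.ofReal (1 / ((i : ℕ) + 1 : ℝ))) :
    μ {ω | m + 2 ≤ ∑ i, Z i ω} ≤ ENNReal.ofReal ((m : ℝ) ^ (-(m : ℝ) / 5)) := by
  have hm' : (98 : ℝ) ≤ m := by exact_mod_cast hm
  have hmpos : (0 : ℝ) < m := by linarith
  set r := Real.sqrt m with hr
  have hr2 : r * r = m := Real.mul_self_sqrt hmpos.le
  have hr0 : 0 ≤ r := Real.sqrt_nonneg _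
  have hr9 : 9 ≤ r := by nlinarith
  set L := Real.log m with hL
  have hL4 : 4 ≤ L := by
    rw [hL, Real.le_log_iff_exp_le hmpos]
    have h1 : Real.exp 4 = Real.exp 1 ^ 4 := by
      rw [← Real.exp_nat_mul]; norm_num
    have h2 : Real.exp 1 ^ 4 ≤ (3 : ℝ) ^ 4 :=
      pow_le_pow_left₀ (Real.exp_pos 1).le (by linarith [Real.exp_one_lt_d9]) 4
    rw [h1]; norm_num at h2; linarith
  have hexp : Real.exp (L / 2) = r := by
    rw [hL, hr, Real.sqrt_eq_rpow, Real.rpow_def_of_pos hmpos]; ring_nf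
  have hmX : ∀ i, Measurable (fun ω => (Z i ω : ℝ)) := fun i =>
    (measurable_from_top (f := fun k : ℕ => (k : ℝ))).comp (hmeas i)
  have hind : iIndepFun (fun i ω => (Z i ω : ℝ)) μ :=
    hindep.comp (fun _ (k : ℕ) => (k : ℝ)) (fun _ => measurable_from_top)
  have hmgf : ∀ i : Fin n, mgf (fun ω => (Z i ω : ℝ)) μ (L / 2) = 1 + (r - 1) * (1 / ((i : ℕ) + 1 : ℝ)) := by
    intro i
    have hms : MeasurableSet {ω | Z i ω = 1} := hmeas i (measurableSet_singleton 1)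
    have h1 : (fun ω => Real.exp (L / 2 * (Z i ω : ℝ))) =
        fun ω => 1 + (r - 1) * ({ω | Z i ω = 1}.indicator (fun _ => (1 : ℝ)) ω) := by
      funext ω
      have h01 : Z i ω = 0 ∨ Z i ω = 1 := by have := hval i ω; omega
      rcases h01 with h | h
      · simp [h]
      · simp [h, hexp]
    have hint : Integrable ({ω | Z i ω = 1}.indicator (fun _ => (1 : ℝ))) μ :=
      (integrable_const (1 : ℝ)).indicator hms
    rw [mgf, h1, integral_add (integrable_const _) (hint.const_mul _), integral_const_mul,
      integral_indicator_const _ hms, Measure.real, hp i, ENNReal.toReal_ofReal (by positivity)]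
    simp
  have hint : Integrable (fun ω => Real.exp (L / 2 * (∑ i, fun ω => (Z i ω : ℝ)) ω)) μ := by
    apply hind.integrable_exp_mul_sum hmX
    intro i _
    refine Integrable.of_bound ((hmX i).const_mul _).exp.aestronglyMeasurable (Real.exp (L / 2)) ?_
    refine Filter.Eventually.of_forall fun ω => ?_
    rw [Real.norm_eq_abs, abs_of_pos (Real.exp_pos _), Real.exp_le_exp]
    have : (Z i ω : ℝ) ≤ 1 := by exact_mod_cast hval i ω
    nlinarith
  have hch := measure_ge_le_exp_mul_mgf (μ := μ) (X := ∑ i, fun ω => (Z i ω : ℝ)) ((m : ℝ) + 2)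
    (t := L / 2) (by linarith) hint
  rw [hind.mgf_sum hmX] at hch
  have hH : ∑ i : Fin n, (1 / ((i : ℕ) + 1 : ℝ)) ≤ 1 + Real.log n := by
    have h := harmonic_le_one_add_log n
    rw [harmonic] at h
    push_cast at h
    rw [Fin.sum_univ_eq_sum_range (fun i : ℕ => (1 / ((i : ℝ) + 1)))]
    simpa using h
  have hlog : Real.log n ≤ 0.7 + r := by
    have hn0 : (0 : ℝ) < n := by exact_mod_cast hn
    have h := Real.log_le_log hn0 hnm
    rw [Real.log_mul (by norm_num) (Real.exp_pos _).ne', Real.log_exp] at h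
    linarith [Real.log_two_lt_d9]
  have hprod : ∏ i : Fin n, mgf (fun ω => (Z i ω : ℝ)) μ (L / 2)
      ≤ Real.exp ((r - 1) * (1 + Real.log n)) := by
    calc ∏ i : Fin n, mgf (fun ω => (Z i ω : ℝ)) μ (L / 2)
        ≤ ∏ i : Fin n, Real.exp ((r - 1) * (1 / ((i : ℕ) + 1 : ℝ))) := by
          apply Finset.prod_le_prod
          · intro i _; exact mgf_nonneg
          · intro i _
            rw [hmgf i, add_comm]
            exact Real.add_one_le_exp _
      _ = Real.exp ((r - 1) * ∑ i : Fin n, (1 / ((i : ℕ) + 1 : ℝ))) := by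
          rw [← Real.exp_sum, Finset.mul_sum]
      _ ≤ _ := by
          rw [Real.exp_le_exp]
          exact mul_le_mul_of_nonneg_left hH (by linarith)
  have hset : {ω | m + 2 ≤ ∑ i, Z i ω} = {ω | (m : ℝ) + 2 ≤ (∑ i, fun ω => (Z i ω : ℝ)) ω} := by
    ext ω
    simp only [Set.mem_setOf_eq, Finset.sum_apply]
    constructor
    · intro h; exact_mod_cast h
    · intro h; exact_mod_cast h
  rw [hset]
  refine ENNReal.le_ofReal_iff_toReal_le (measure_ne_top _ _) (by positivity) |>.2 ?_
  refine hch.trans ((mul_le_mul_of_nonneg_left hprod (Real.exp_pos _).le).trans ?_)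
  rw [← Real.exp_add, Real.rpow_def_of_pos hmpos, Real.exp_le_exp, ← hL]
  have h1 : (r - 1) * (1 + Real.log n) ≤ (r - 1) * (1.7 + r) :=
    mul_le_mul_of_nonneg_left (by linarith) (by linarith)
  have h2 : 4 * (m : ℝ) ≤ L * m := mul_le_mul_of_nonneg_right hL4 hmpos.le
  nlinarith
end

section
/- There exists a natural number m₀ such that for every integer m ≥ m₀ and every integer n with n ≥ m·log m (so that p = m·log m / n ∈ (0, 1]), if Y is the sum of n independent Bernoulli random variables each with success probability p = m·log m / n, then P(Y ≤ m + 1) ≤ m^{−m/4}. -/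
open MeasureTheory ProbabilityTheory Finset

/-- There exists `m₀` such that for every `m ≥ m₀` and every `n` with
`n ≥ m·log m` (so that `p = m·log m / n ∈ (0, 1]`), if `Y` is the sum of `n` independent
Bernoulli random variables with success probability `p`, then `P(Y ≤ m + 1) ≤ m^{−m/4}`. -/
theorem binomial_lower_tail_bound :
    ∃ m₀ : ℕ, ∀ m : ℕ, m₀ ≤ m → ∀ n : ℕ, (m : ℝ) * Real.log m ≤ (n : ℝ) →
      ∀ (Ω : Type) [MeasurableSpace Ω] (μ : Measure Ω), IsProbabilityMeasure μ →
        ∀ Z : Fin n → Ω → ℕ, (∀ i, Measurable (Z i)) →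
          ProbabilityTheory.iIndepFun Z μ →
          (∀ i ω, Z i ω ≤ 1) →
          (∀ i : Fin n,
            μ {ω | Z i ω = 1} = ENNReal.ofReal ((m : ℝ) * Real.log m / (n : ℝ))) →
          μ {ω | (∑ i, Z i ω) ≤ m + 1} ≤ ENNReal.ofReal ((m : ℝ) ^ (-(m : ℝ) / 4)) := by
  refine ⟨729, fun m hm n hn Ω _ μ hμ Z hZm hZi hZ1 hZp => ?_⟩
  have hmR : (729 : ℝ) ≤ m := by exact_mod_cast hm
  have hm0 : (0 : ℝ) < m := by linarith
  have hL : (6 : ℝ) ≤ Real.log m := by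
    rw [Real.le_log_iff_exp_le hm0]
    have h1 : Real.exp 1 ≤ 3 := by linarith [Real.exp_one_lt_d9]
    calc Real.exp 6 = Real.exp 1 ^ 6 := by rw [← Real.exp_nat_mul]; norm_num
      _ ≤ 3 ^ 6 := by gcongr
      _ ≤ m := by linarith
  have hn0 : (0 : ℝ) < n := by nlinarith
  set L := Real.log m with hLdef
  set p : ℝ := m * L / n with hp
  have hp0 : 0 ≤ p := by positivity
  set c : ℝ := Real.exp (-1) with hc
  have hc1 : c ≤ 0.37 := Real.exp_neg_one_lt_d9.le.trans (by norm_num)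
  let X : Fin n → Ω → ℝ := fun i ω => (Z i ω : ℝ)
  have hXm : ∀ i, Measurable (X i) := fun i => measurable_from_nat.comp (hZm i)
  have hXi : iIndepFun X μ := hZi.comp (fun _ k => (k : ℝ)) (fun _ => measurable_from_nat)
  have hmgf : ∀ i, mgf (X i) μ (-1) ≤ Real.exp (-(1 - c) * p) := by
    intro i
    have hms : MeasurableSet {ω | Z i ω = 1} := hZm i (measurableSet_singleton 1)
    have e : (fun ω => Real.exp (-1 * X i ω))
        = fun ω => 1 - {ω | Z i ω = 1}.indicator (fun _ => 1 - c) ω := by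
      funext ω
      have := hZ1 i ω
      have h01 : Z i ω = 0 ∨ Z i ω = 1 := by omega
      rcases h01 with h | h <;> simp [X, h, hc, Set.indicator]
    have hr : μ.real {ω | Z i ω = 1} = p := by
      rw [measureReal_def, hZp i, ENNReal.toReal_ofReal hp0]
    rw [mgf, e, integral_sub (integrable_const _) ((integrable_const _).indicator hms),
      integral_indicator_const _ hms, hr]
    simp only [integral_const, probReal_univ, smul_eq_mul]
    have := Real.add_one_le_exp (-(1 - c) * p)
    linarith
  have hsum : mgf (∑ i, X i) μ (-1) ≤ Real.exp (-(1 - c) * (m * L)) := by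
    rw [hXi.mgf_sum hXm]
    calc ∏ i, mgf (X i) μ (-1) ≤ ∏ _i : Fin n, Real.exp (-(1 - c) * p) :=
          Finset.prod_le_prod (fun i _ => mgf_nonneg) (fun i _ => hmgf i)
      _ = Real.exp (-(1 - c) * (m * L)) := by
          rw [Finset.prod_const, ← Real.exp_nat_mul, Finset.card_univ, Fintype.card_fin]
          congr 1
          rw [hp]; field_simp
  have hint : Integrable (fun ω => Real.exp (-1 * (∑ i, X i) ω)) μ := by
    refine Integrable.of_bound (C := 1) ?_ (ae_of_all _ fun ω => ?_)
    · have : Measurable (∑ i, X i) := by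
        have h := Finset.measurable_sum Finset.univ (fun i _ => hXm i)
        convert h using 1
        funext ω; simp
      exact (Real.measurable_exp.comp (this.const_mul (-1))).aestronglyMeasurable
    · rw [Real.norm_eq_abs, abs_of_pos (Real.exp_pos _), Real.exp_le_one_iff]
      have : 0 ≤ (∑ i, X i) ω := by
        rw [Finset.sum_apply]; exact Finset.sum_nonneg fun i _ => Nat.cast_nonneg _
      linarith
  have hch := measure_le_le_exp_mul_mgf (μ := μ) (X := ∑ i, X i) (t := -1) ((m : ℝ) + 1)
    (by norm_num) hint
  have hset : {ω | (∑ i, Z i ω) ≤ m + 1} = {ω | (∑ i, X i) ω ≤ (m : ℝ) + 1} := by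
    ext ω
    simp only [Set.mem_ofPred_eq, Finset.sum_apply, X]
    exact_mod_cast Iff.rfl
  rw [hset, ← ofReal_measureReal]
  apply ENNReal.ofReal_le_ofReal
  refine hch.trans ?_
  calc Real.exp (-(-1) * ((m : ℝ) + 1)) * mgf (∑ i, X i) μ (-1)
      ≤ Real.exp (-(-1) * ((m : ℝ) + 1)) * Real.exp (-(1 - c) * (m * L)) := by gcongr
    _ ≤ (m : ℝ) ^ (-(m : ℝ) / 4) := by
        rw [← Real.exp_add, Real.rpow_def_of_pos hm0, Real.exp_le_exp, ← hLdef]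
        have h1 : 6 * (m : ℝ) ≤ m * L := by nlinarith
        have h2 : 0.63 * (m * L) ≤ (1 - c) * (m * L) := by
          apply mul_le_mul_of_nonneg_right <;> [linarith; linarith]
        linarith
end

section
/- For every integer m ≥ 1, setting Ψ = m!/ξ_m^m, the function f(x) = Ψ · e^{−x} · Σ_{j=0}^{m} x^j/j! − e^{−x} is strictly increasing on the interval [0, ξ_m]; consequently, for every β ∈ [0, ξ_m], f(β) ≤ (1 − e^{−ξ_m}) · Ψ − e^{−ξ_m}. -/
open Real Finset

theorem hasDerivAt_aux (m : ℕ) (y : ℝ) :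
    HasDerivAt (fun y : ℝ => Real.exp (-y) *
      ∑ j ∈ Finset.range (m + 1), y ^ j / (Nat.factorial j : ℝ))
      (-(Real.exp (-y) * (y ^ m / (Nat.factorial m : ℝ)))) y := by
  have he : HasDerivAt (fun y : ℝ => Real.exp (-y)) (-Real.exp (-y)) y := by
    simpa using (hasDerivAt_neg y).exp
  induction m with
  | zero => simpa using he
  | succ n ih =>
    have h2 := ih.add (he.mul ((hasDerivAt_pow (n + 1) y).div_const (Nat.factorial (n + 1) : ℝ)))
    have hfun : (fun y : ℝ => Real.exp (-y) *
        ∑ j ∈ Finset.range (n + 1 + 1), y ^ j / (Nat.factorial j : ℝ)) =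
        (fun y : ℝ => Real.exp (-y) *
          ∑ j ∈ Finset.range (n + 1), y ^ j / (Nat.factorial j : ℝ)) +
        (fun y : ℝ => Real.exp (-y)) * (fun y : ℝ => y ^ (n + 1) / (Nat.factorial (n + 1) : ℝ)) := by
      funext z
      simp only [Pi.add_apply, Pi.mul_apply]
      rw [Finset.sum_range_succ, mul_add]
    rw [hfun]
    refine h2.congr_deriv ?_
    have h1 : (Nat.factorial n : ℝ) ≠ 0 := by positivity
    have h3 : ((n : ℝ) + 1) ≠ 0 := by positivity
    rw [Nat.factorial_succ]
    push_cast
    field_simp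
    ring

theorem exp_eq_aux (m : ℕ) (x : ℝ)
    (hxm : (∑' k : ℕ, x ^ (m + 1 + k) / (Nat.factorial (m + 1 + k) : ℝ)) = 1) :
    Real.exp x = (∑ j ∈ Finset.range (m + 1), x ^ j / (Nat.factorial j : ℝ)) + 1 := by
  have h := (Real.summable_pow_div_factorial x).sum_add_tsum_nat_add (m + 1)
  rw [Real.exp_eq_exp_ℝ, NormedSpace.exp_eq_tsum_div]
  beta_reduce
  rw [← h]
  congr 1
  rw [← hxm]
  exact tsum_congr fun k => by rw [add_comm]

/-- For every integer `m ≥ 1`, with `ξ_m` the unique positive solution of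
`Σ_{k=m+1}^{∞} x^k/k! = 1` and `Ψ = m!/ξ_m^m`, the function
`f(x) = Ψ · e^{−x} · Σ_{j=0}^{m} x^j/j! − e^{−x}` is strictly increasing on `[0, ξ_m]`;
consequently, every `β ∈ [0, ξ_m]` satisfies `f(β) ≤ (1 − e^{−ξ_m}) · Ψ − e^{−ξ_m}`. -/
theorem f_strictMonoOn_and_le (m : ℕ) (hm : 1 ≤ m) (x : ℝ) (hx : 0 < x)
    (hxm : (∑' k : ℕ, x ^ (m + 1 + k) / (Nat.factorial (m + 1 + k) : ℝ)) = 1) :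
    StrictMonoOn
      (fun y : ℝ => ((Nat.factorial m : ℝ) / x ^ m) *
          (Real.exp (-y) * ∑ j ∈ Finset.range (m + 1), y ^ j / (Nat.factorial j : ℝ)) -
        Real.exp (-y))
      (Set.Icc (0 : ℝ) x) ∧
    ∀ β ∈ Set.Icc (0 : ℝ) x,
      ((Nat.factorial m : ℝ) / x ^ m) *
          (Real.exp (-β) * ∑ j ∈ Finset.range (m + 1), β ^ j / (Nat.factorial j : ℝ)) -
        Real.exp (-β) ≤
      (1 - Real.exp (-x)) * ((Nat.factorial m : ℝ) / x ^ m) - Real.exp (-x) := by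
  set F : ℝ → ℝ := (fun y : ℝ => ((Nat.factorial m : ℝ) / x ^ m) *
          (Real.exp (-y) * ∑ j ∈ Finset.range (m + 1), y ^ j / (Nat.factorial j : ℝ)) -
        Real.exp (-y)) with hF
  have hd : ∀ y, HasDerivAt F (Real.exp (-y) * (1 - (y / x) ^ m)) y := by
    intro y
    have he : HasDerivAt (fun y : ℝ => Real.exp (-y)) (-Real.exp (-y)) y := by
      simpa using (hasDerivAt_neg y).exp
    refine (((hasDerivAt_aux m y).const_mul ((Nat.factorial m : ℝ) / x ^ m)).sub he).congr_deriv ?_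
    have h1 : (Nat.factorial m : ℝ) ≠ 0 := by positivity
    rw [div_pow]
    field_simp
    ring
  have hmono : StrictMonoOn F (Set.Icc (0 : ℝ) x) := by
    refine strictMonoOn_of_deriv_pos (convex_Icc 0 x)
      (fun y _ => (hd y).continuousAt.continuousWithinAt) ?_
    intro y hy
    rw [interior_Icc] at hy
    rw [(hd y).deriv]
    have h1 : (y / x) ^ m < 1 :=
      pow_lt_one₀ (div_nonneg hy.1.le hx.le) ((div_lt_one hx).2 hy.2) (by omega)
    exact mul_pos (Real.exp_pos _) (by linarith)
  refine ⟨hmono, fun β hβ => ?_⟩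
  have h1 : F β ≤ F x := hmono.monotoneOn hβ ⟨hx.le, le_refl x⟩ hβ.2
  have h2 : Real.exp (-x) * ∑ j ∈ Finset.range (m + 1), x ^ j / (Nat.factorial j : ℝ)
      = 1 - Real.exp (-x) := by
    have h3 := exp_eq_aux m x hxm
    have h4 : Real.exp (-x) * Real.exp x = 1 := by rw [← Real.exp_add]; simp
    rw [h3] at h4
    linarith
  simp only [hF] at h1
  rw [h2] at h1
  linarith
end
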